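/- arXiv:2603.21453 — 3 statements merged into one kernel-verified Lean document; each statement's English description precedes it below -/
import Mathlib

section
/- Let n ≥ 1 and let P(x) = a_0 + Σ_{j=1}^n (a_j·cos(jx) + b_j·sin(jx)) be a real trigonometric polynomial of degree at most n. Then ∫_0^{2π} |P(x)| dx ≥ 4·√(a_n² + b_n²). -/
/-!
The alternating average of `P` over the `2n` translates by multiples of `π / n` kills all
frequencies `j < n` (`alternating_sum_cos_sin`, a geometric sum over a nontrivial root of unity)
and fixes the frequency-`n` part, so that
`∑_{k < 2n} (-1)^k P(x + kπ/n) = 2n (aₙ cos(nx) + bₙ sin(nx))`.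
Translation preserves the `L¹` norm over a period, so the triangle inequality bounds
`∫ |aₙ cos(nx) + bₙ sin(nx)|` by `∫ |P|`. The former integrand is `√(aₙ² + bₙ²) |cos(nx - θ)|`, and
`∫ |cos(nx - θ)| = 4` (`integral_abs_cos`).
-/

open Real

/-- The sign `(-1)^k` is a character of frequency `n` on the grid `kπ/n`, so it is orthogonal to
all the frequencies `j < n`. -/
lemma alternating_sum_cos_sin {n j : ℕ} (hj : j < n) (x : ℝ) :
    ∑ k ∈ Finset.range (2 * n), (-1 : ℝ) ^ k * cos (j * (x + k * (π / n))) = 0 ∧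
    ∑ k ∈ Finset.range (2 * n), (-1 : ℝ) ^ k * sin (j * (x + k * (π / n))) = 0 := by
  have hn : (0 : ℝ) < n := by exact_mod_cast (Nat.zero_le j).trans_lt hj
  have hnC : (n : ℂ) ≠ 0 := by exact_mod_cast hn.ne'
  set t : ℝ := j * (π / n) with ht
  have hlt : t < π := by
    have : (j : ℝ) < n := by exact_mod_cast hj
    rw [ht, ← mul_div_assoc, div_lt_iff₀ hn]
    nlinarith [pi_pos]
  have hcos : -1 < cos t := by
    rw [← cos_pi]
    exact strictAntiOn_cos ⟨by positivity, hlt.le⟩ ⟨pi_pos.le, le_rfl⟩ hlt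
  set ζ : ℂ := -Complex.exp (t * Complex.I) with hζ
  have hζ1 : ζ ≠ 1 := by
    intro h
    have := congrArg Complex.re h
    rw [hζ, Complex.neg_re, Complex.exp_ofReal_mul_I_re, Complex.one_re] at this
    linarith
  have hζn : ζ ^ (2 * n) = 1 := by
    rw [hζ, (even_two_mul n).neg_pow, ← Complex.exp_nat_mul, Complex.exp_eq_one_iff]
    refine ⟨j, ?_⟩
    rw [ht]
    push_cast
    field_simp
  have hsum : ∑ k ∈ Finset.range (2 * n),
      ((-1 : ℝ) ^ k : ℝ) * Complex.exp ((j * (x + k * (π / n)) : ℝ) * Complex.I) = 0 := by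
    have h0 : ∑ k ∈ Finset.range (2 * n), ζ ^ k = 0 := by
      rw [geom_sum_eq hζ1, hζn, sub_self, zero_div]
    calc _ = ∑ k ∈ Finset.range (2 * n), Complex.exp ((j * x : ℝ) * Complex.I) * ζ ^ k := by
          refine Finset.sum_congr rfl fun k _ => ?_
          rw [hζ, neg_pow (Complex.exp _), ← Complex.exp_nat_mul, mul_left_comm, ← Complex.exp_add, ht]
          push_cast
          congr 2
          ring
      _ = 0 := by rw [← Finset.mul_sum, h0, mul_zero]
  constructor
  · have := congrArg Complex.re hsum
    simpa only [Complex.re_sum, Complex.re_ofReal_mul, Complex.exp_ofReal_mul_I_re,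
      Complex.zero_re] using this
  · have := congrArg Complex.im hsum
    simpa only [Complex.im_sum, Complex.im_ofReal_mul, Complex.exp_ofReal_mul_I_im,
      Complex.zero_im] using this

lemma integral_abs_cos {n : ℕ} (hn : 1 ≤ n) (θ : ℝ) :
    ∫ x in (0 : ℝ)..(2 * π), |cos (n * x - θ)| = 4 := by
  have hn0 : (n : ℝ) ≠ 0 := by positivity
  have hper : Function.Periodic (fun x : ℝ => |cos x|) π := fun x => by
    simp only [cos_add_pi, abs_neg]
  have hhalf : ∫ x in (-(π / 2))..(-(π / 2) + π), |cos x| = 2 := by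
    have : ∫ x in (-(π / 2))..(-(π / 2) + π), |cos x|
        = ∫ x in (-(π / 2))..(-(π / 2) + π), cos x := by
      refine intervalIntegral.integral_congr fun x hx => ?_
      rw [Set.uIcc_of_le (by linarith [pi_pos])] at hx
      exact abs_of_nonneg (cos_nonneg_of_mem_Icc ⟨hx.1, by linarith [hx.2]⟩)
    rw [this, integral_cos, show -(π / 2) + π = π / 2 by ring, sin_neg, sin_pi_div_two]
    norm_num
  have hint : ∀ a b : ℝ, IntervalIntegrable (fun x => |cos x|) MeasureTheory.volume a b :=
    fun a b => (continuous_cos.abs).intervalIntegrable a b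
  -- After the substitution `y = nx - θ` the range of integration consists of `2n` periods.
  have hfull : ∫ x in (-θ)..(-θ + ((2 * n : ℕ) : ℤ) • π), |cos x| = 2 * n * 2 := by
    have h := hper.intervalIntegral_add_eq 0 (-(π / 2))
    rw [hhalf, zero_add] at h
    rw [hper.intervalIntegral_add_zsmul_eq _ _ hint, hper.intervalIntegral_add_eq _ 0, zero_add, h]
    simp
  rw [intervalIntegral.integral_comp_mul_sub (fun x => |cos x|) hn0,
    show (n : ℝ) * (2 * π) - θ = -θ + ((2 * n : ℕ) : ℤ) • π by simp; ring,
    show (n : ℝ) * 0 - θ = -θ by ring, hfull, smul_eq_mul]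
  field_simp
  norm_num

theorem trig_L1_lower_bound (n : ℕ) (hn : 1 ≤ n) (a b : ℕ → ℝ) (P : ℝ → ℝ)
    (hP : ∀ x : ℝ, P x = a 0 + ∑ j ∈ Finset.Icc 1 n,
      (a j * Real.cos (j * x) + b j * Real.sin (j * x))) :
    4 * Real.sqrt (a n ^ 2 + b n ^ 2) ≤ ∫ x in (0 : ℝ)..(2 * π), |P x| := by
  have hn0 : (n : ℝ) ≠ 0 := by positivity
  have hcont : Continuous P := by
    rw [funext hP]
    fun_prop
  have hper : Function.Periodic P (2 * π) := fun x => by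
    simp only [hP, mul_add, cos_add_nat_mul_two_pi, sin_add_nat_mul_two_pi]
  have hfilter : ∀ x, ∑ k ∈ Finset.range (2 * n), (-1 : ℝ) ^ k * P (x + k * (π / n))
      = 2 * n * (a n * cos (n * x) + b n * sin (n * x)) := by
    intro x
    have hconst : ∑ k ∈ Finset.range (2 * n), (-1 : ℝ) ^ k * a 0 = 0 := by
      have h := (alternating_sum_cos_sin (show 0 < n from hn) x).1
      simp only [Nat.cast_zero, zero_mul, cos_zero, mul_one] at h
      rw [← Finset.sum_mul, h, zero_mul]
    have hfreq : ∀ j ∈ Finset.Icc 1 n, ∑ k ∈ Finset.range (2 * n), (-1 : ℝ) ^ k *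
        (a j * cos (j * (x + k * (π / n))) + b j * sin (j * (x + k * (π / n))))
        = if j = n then 2 * n * (a n * cos (n * x) + b n * sin (n * x)) else 0 := by
      intro j hj
      split_ifs with h
      · subst h
        have : ∀ k ∈ Finset.range (2 * j), (-1 : ℝ) ^ k *
            (a j * cos (j * (x + k * (π / j))) + b j * sin (j * (x + k * (π / j))))
            = a j * cos (j * x) + b j * sin (j * x) := by
          intro k _
          have h1 : (j : ℝ) * (x + k * (π / j)) = j * x + k * π := by field_simp
          have h2 : (-1 : ℝ) ^ k * (-1) ^ k = 1 := by rw [← mul_pow]; norm_num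
          rw [h1, cos_add_nat_mul_pi, sin_add_nat_mul_pi]
          linear_combination (a j * cos (j * x) + b j * sin (j * x)) * h2
        rw [Finset.sum_congr rfl this]
        simp only [Finset.sum_const, Finset.card_range, nsmul_eq_mul]
        push_cast
        ring
      · obtain ⟨hc, hs⟩ :=
          alternating_sum_cos_sin (lt_of_le_of_ne (Finset.mem_Icc.1 hj).2 h) x
        simp only [mul_add, mul_left_comm _ (a j), mul_left_comm _ (b j), Finset.sum_add_distrib,
          ← Finset.mul_sum] at hc hs ⊢
        rw [hc, hs, mul_zero, mul_zero, add_zero]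
    simp only [hP]
    simp only [mul_add ((-1 : ℝ) ^ _) (a 0), Finset.sum_add_distrib (f := fun k => (-1 : ℝ) ^ k * a 0)]
    rw [hconst, zero_add]
    simp only [Finset.mul_sum]
    rw [Finset.sum_comm, Finset.sum_congr rfl hfreq]
    simp [hn]
  have hshift : ∀ c : ℝ, ∫ x in (0 : ℝ)..(2 * π), |P (x + c)| = ∫ x in (0 : ℝ)..(2 * π), |P x| := by
    intro c
    have hper' : Function.Periodic (fun x => |P x|) (2 * π) := fun x => by simp only [hper x]
    rw [intervalIntegral.integral_comp_add_right (fun x => |P x|), zero_add, add_comm (2 * π),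
      hper'.intervalIntegral_add_eq c 0, zero_add]
  -- Polar form `aₙ + i bₙ = r e^{iθ}`, with `θ = z.arg`; for `z = 0` the value of `arg` is immaterial.
  set r := √(a n ^ 2 + b n ^ 2) with hr
  set z : ℂ := ⟨a n, b n⟩ with hz
  have hnorm : ‖z‖ = r := by
    rw [Complex.norm_eq_sqrt_sq_add_sq]
  have hpolar : ∀ x, |a n * cos (n * x) + b n * sin (n * x)| = r * |cos (n * x - z.arg)| := by
    intro x
    have h1 : r * cos z.arg = a n := hnorm ▸ Complex.norm_mul_cos_arg z
    have h2 : r * sin z.arg = b n := hnorm ▸ Complex.norm_mul_sin_arg z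
    have h3 : r * |cos (n * x - z.arg)| = |r * cos (n * x - z.arg)| := by
      rw [abs_mul, abs_of_nonneg (sqrt_nonneg _)]
    rw [h3, cos_sub]
    congr 1
    linear_combination -cos (n * x) * h1 - sin (n * x) * h2
  have hle : ∀ x, 2 * n * (r * |cos (n * x - z.arg)|)
      ≤ ∑ k ∈ Finset.range (2 * n), |P (x + k * (π / n))| := by
    intro x
    calc 2 * n * (r * |cos (n * x - z.arg)|)
        = |∑ k ∈ Finset.range (2 * n), (-1 : ℝ) ^ k * P (x + k * (π / n))| := by
          rw [hfilter, abs_mul, hpolar, abs_of_nonneg (by positivity : (0 : ℝ) ≤ 2 * n)]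
      _ ≤ ∑ k ∈ Finset.range (2 * n), |(-1 : ℝ) ^ k * P (x + k * (π / n))| :=
          Finset.abs_sum_le_sum_abs _ _
      _ = _ := by simp [abs_mul]
  have hint : ∫ x in (0 : ℝ)..(2 * π), 2 * n * (r * |cos (n * x - z.arg)|)
      ≤ ∫ x in (0 : ℝ)..(2 * π), ∑ k ∈ Finset.range (2 * n), |P (x + k * (π / n))| := by
    refine intervalIntegral.integral_mono_on (by positivity) ?_ ?_ fun x _ => hle x
    · exact Continuous.intervalIntegrable (by fun_prop) _ _
    · exact Continuous.intervalIntegrable (by fun_prop) _ _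
  rw [intervalIntegral.integral_const_mul, intervalIntegral.integral_const_mul,
    integral_abs_cos hn, intervalIntegral.integral_finsetSum
      fun k _ => Continuous.intervalIntegrable (by fun_prop) _ _] at hint
  simp only [hshift, Finset.sum_const, Finset.card_range, nsmul_eq_mul] at hint
  push_cast at hint
  rw [mul_comm 4]
  exact le_of_mul_le_mul_left hint (by positivity)
end

section
/- Let n ≥ 1 and let P(x) = a_0 + Σ_{j=1}^n (a_j·cos(jx) + b_j·sin(jx)) be a real trigonometric polynomial of degree at most n with (a_n, b_n) ≠ (0, 0), having 2n distinct zeroes x_1, …, x_{2n} in [0, 2π) (each such zero is then simple, so P'(x_k) ≠ 0 for each k). Then Σ_{k=1}^{2n} 1/|P'(x_k)| ≥ 2/√(a_n² + b_n²). -/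
open Real

/-!
Substituting `w = exp (i x)` turns `P` into an algebraic polynomial: `exp (i n x) * P x = p(w)`,
where `p` has degree `2n` and leading coefficient `c = (a n - i b n) / 2`. The points
`w k = exp (i z k)` are `2n` distinct roots of `p`, so `p` is `c` times the nodal polynomial of the
`w k`. The leading coefficient of the Lagrange interpolation of `X ^ (2n - 1)` at these nodes is
`∑ k, w k ^ (2n - 1) / ∏_{j ≠ k} (w k - w j) = 1` (`Lagrange.leadingCoeff_eq_sum`). Differentiating
the substitution at a zero gives `|P' (z k)| = |p' (w k)| = |c| ∏_{j ≠ k} |w k - w j|`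
(`norm_deriv_eq`), so the triangle inequality yields `1 / |c| ≤ ∑ k, 1 / |P' (z k)|`, and
`|c| = √(a n ^ 2 + b n ^ 2) / 2`.
-/

namespace TrigReciprocal

open Polynomial

/-- The algebraic polynomial attached to a trigonometric polynomial of degree at most `n` with
coefficients `a`, `b`: its value at `exp (i x)` is `exp (i n x)` times the value of the
trigonometric polynomial at `x`. -/
noncomputable def assocPoly (n : ℕ) (a b : ℕ → ℝ) : ℂ[X] :=
  C (a 0 : ℂ) * X ^ n + ∑ j ∈ Finset.Icc 1 n,
    (C ((a j - Complex.I * b j) / 2) * X ^ (n + j) + C ((a j + Complex.I * b j) / 2) * X ^ (n - j))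

lemma eval_assocPoly (n : ℕ) (a b : ℕ → ℝ) (x : ℝ) :
    (assocPoly n a b).eval (Complex.exp (x * Complex.I)) =
      Complex.exp (x * Complex.I) ^ n * ((a 0 + ∑ j ∈ Finset.Icc 1 n,
        (a j * Real.cos (j * x) + b j * Real.sin (j * x)) : ℝ) : ℂ) := by
  simp only [assocPoly, eval_add, eval_mul, eval_C, eval_pow, eval_X, eval_finsetSum]
  push_cast
  rw [mul_add, Finset.mul_sum, mul_comm (_ ^ n) (a 0 : ℂ)]
  congr 1
  refine Finset.sum_congr rfl fun j hj => ?_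
  have hjn := (Finset.mem_Icc.mp hj).2
  have h0 : Complex.exp (x * Complex.I) ^ j ≠ 0 := pow_ne_zero _ (Complex.exp_ne_zero _)
  have e1 : Complex.exp (((j : ℂ) * x) * Complex.I) = Complex.exp (x * Complex.I) ^ j := by
    rw [← Complex.exp_nat_mul]; ring_nf
  have e2 : Complex.exp (-((j : ℂ) * x) * Complex.I) = (Complex.exp (x * Complex.I) ^ j)⁻¹ := by
    rw [← e1, ← Complex.exp_neg]; ring_nf
  have e3 : Complex.exp (x * Complex.I) ^ n
      = Complex.exp (x * Complex.I) ^ (n - j) * Complex.exp (x * Complex.I) ^ j := by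
    rw [← pow_add, Nat.sub_add_cancel hjn]
  rw [Complex.cos, Complex.sin, e1, e2, pow_add, e3]
  field_simp
  ring_nf

lemma coeff_assocPoly (n : ℕ) (hn : 1 ≤ n) (a b : ℕ → ℝ) :
    (assocPoly n a b).coeff (2 * n) = (a n - Complex.I * b n) / 2 := by
  simp only [assocPoly, coeff_add, coeff_C_mul, coeff_X_pow, finsetSum_coeff]
  rw [Finset.sum_eq_single n]
  · rw [if_neg (by omega), if_pos (by omega), if_neg (by omega)]; simp
  · intro j hj hne
    rw [if_neg (by omega), if_neg (by omega)]; simp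
  · intro h; simp [hn] at h

lemma natDegree_assocPoly_le (n : ℕ) (a b : ℕ → ℝ) : (assocPoly n a b).natDegree ≤ 2 * n := by
  refine natDegree_add_le_of_degree_le ((natDegree_C_mul_X_pow_le _ _).trans (by omega))
    (natDegree_sum_le_of_forall_le _ _ fun j hj => ?_)
  have hjn := (Finset.mem_Icc.mp hj).2
  exact natDegree_add_le_of_degree_le ((natDegree_C_mul_X_pow_le _ _).trans (by omega))
    ((natDegree_C_mul_X_pow_le _ _).trans (by omega))

/-- If `p(exp (i x)) = exp (i n x) * P x` for all real `x`, then `|P'| = |p'(exp (i ·))|` at every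
zero of `P`: differentiate both sides, where the factors `i`, `exp (i x)` have modulus one. -/
lemma norm_deriv_eq (n : ℕ) (P : ℝ → ℝ) (p : ℂ[X])
    (hp : ∀ x : ℝ, p.eval (Complex.exp (x * Complex.I)) = Complex.exp (x * Complex.I) ^ n * P x)
    (x : ℝ) (hx : P x = 0) (hd : DifferentiableAt ℝ P x) :
    ‖p.derivative.eval (Complex.exp (x * Complex.I))‖ = |deriv P x| := by
  have hE : HasDerivAt (fun t : ℝ => Complex.exp (t * Complex.I))
      (Complex.exp (x * Complex.I) * Complex.I) x := by
    simpa using ((hasDerivAt_id x).ofReal_comp.mul_const Complex.I).cexp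
  have h1 : HasDerivAt (fun t : ℝ => p.eval (Complex.exp (t * Complex.I)))
      (p.derivative.eval (Complex.exp (x * Complex.I)) *
        (Complex.exp (x * Complex.I) * Complex.I)) x :=
    HasDerivAt.comp x (h := fun t : ℝ => Complex.exp (t * Complex.I)) (p.hasDerivAt _) hE
  have h2 : HasDerivAt (fun t : ℝ => Complex.exp (t * Complex.I) ^ n * (P t : ℂ)) _ x :=
    (hE.pow n).mul hd.hasDerivAt.ofReal_comp
  simp_rw [hp] at h1
  have h := congrArg norm (h1.unique h2)
  simpa [hx, Complex.norm_exp_ofReal_mul_I] using h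

end TrigReciprocal

/-- **Lower bound on reciprocal magnitudes of derivatives.** Let
`P(x) = a 0 + ∑_{j=1}^n (a j cos(jx) + b j sin(jx))` be a real trigonometric polynomial of
degree at most `n ≥ 1` with `(a n, b n) ≠ (0,0)`, having `2n` distinct zeroes
`z 0, …, z (2n-1)` in `[0, 2π)` (each such zero being simple, so that `P'(z k) ≠ 0`).
Then `∑ k, 1/|P'(z k)| ≥ 2/√(aₙ² + bₙ²)`. -/
theorem trig_reciprocal_derivative_bound (n : ℕ) (hn : 1 ≤ n) (a b : ℕ → ℝ) (P : ℝ → ℝ)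
    (hP : ∀ x : ℝ, P x = a 0 + ∑ j ∈ Finset.Icc 1 n,
      (a j * Real.cos (j * x) + b j * Real.sin (j * x)))
    (hlead : ¬(a n = 0 ∧ b n = 0))
    (z : Fin (2 * n) → ℝ) (hzinj : Function.Injective z)
    (hzmem : ∀ k, z k ∈ Set.Ico (0 : ℝ) (2 * π))
    (hzzero : ∀ k, P (z k) = 0)
    (hzsimple : ∀ k, deriv P (z k) ≠ 0) :
    2 / Real.sqrt (a n ^ 2 + b n ^ 2) ≤ ∑ k : Fin (2 * n), 1 / |deriv P (z k)| := by
  classical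
  set w : Fin (2 * n) → ℂ := fun k => Complex.exp (z k * Complex.I) with hw
  have hwinj : Function.Injective w := by
    intro k l hkl
    refine hzinj (Circle.exp_injOn_Ico (by simp) (hzmem k) (hzmem l) (Circle.ext ?_))
    simpa [hw] using hkl
  set p := TrigReciprocal.assocPoly n a b with hpdef
  set c : ℂ := (a n - Complex.I * b n) / 2 with hc
  have hp : ∀ x : ℝ, p.eval (Complex.exp (x * Complex.I))
      = Complex.exp (x * Complex.I) ^ n * P x := by
    intro x
    rw [hP x]
    exact TrigReciprocal.eval_assocPoly n a b x
  have hcnorm : ‖c‖ = Real.sqrt (a n ^ 2 + b n ^ 2) / 2 := by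
    rw [hc, norm_div, Complex.norm_def, Complex.normSq_apply]
    simp [pow_two]
  have hspos : 0 < Real.sqrt (a n ^ 2 + b n ^ 2) := by
    apply Real.sqrt_pos.mpr
    by_contra! h
    exact hlead ⟨by nlinarith [sq_nonneg (a n), sq_nonneg (b n)],
      by nlinarith [sq_nonneg (a n), sq_nonneg (b n)]⟩
  have hcoef : p.coeff (2 * n) = c := TrigReciprocal.coeff_assocPoly n hn a b
  have hpnodal : p = Polynomial.C c * Lagrange.nodal Finset.univ w := by
    have hnod : (Lagrange.nodal Finset.univ w).natDegree = 2 * n := by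
      simp [Lagrange.natDegree_nodal]
    refine Polynomial.eq_of_degree_sub_lt_of_eval_index_eq Finset.univ hwinj.injOn ?_ ?_
    · -- both sides have degree at most `2n` and the same coefficient in degree `2n`
      rw [Finset.card_univ, Fintype.card_fin, Polynomial.degree_lt_iff_coeff_zero]
      intro m hm
      rcases hm.eq_or_lt with rfl | hm
      · have := (Lagrange.nodal_monic (s := Finset.univ) (v := w)).coeff_natDegree
        rw [hnod] at this
        simp [hcoef, this]
      · rw [Polynomial.coeff_sub, Polynomial.coeff_C_mul, Polynomial.coeff_eq_zero_of_natDegree_lt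
          ((TrigReciprocal.natDegree_assocPoly_le n a b).trans_lt hm),
          Polynomial.coeff_eq_zero_of_natDegree_lt (hnod.trans_lt hm)]
        simp
    · intro k hk
      rw [Polynomial.eval_mul, Lagrange.eval_nodal_at_node hk, hw, hp, hzzero]
      simp
  have hderiv : ∀ k, |deriv P (z k)| = ‖c‖ * ‖∏ j ∈ Finset.univ.erase k, (w k - w j)‖ := by
    intro k
    rw [← TrigReciprocal.norm_deriv_eq n P p hp (z k) (hzzero k)
      (differentiableAt_of_deriv_ne_zero (hzsimple k)), hpnodal, Polynomial.derivative_C_mul,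
      Polynomial.eval_mul, Polynomial.eval_C, norm_mul]
    change ‖c‖ * ‖Polynomial.eval (w k) _‖ = _
    rw [Lagrange.eval_nodal_derivative_eval_node_eq (Finset.mem_univ k), Lagrange.eval_nodal]
  have hone := Lagrange.leadingCoeff_eq_sum (s := Finset.univ) (v := w) hwinj.injOn
    (P := (Polynomial.X : Polynomial ℂ) ^ (2 * n - 1)) (by
      rw [Polynomial.degree_X_pow, Finset.card_univ, Fintype.card_fin]
      exact_mod_cast (by omega : 2 * n = 2 * n - 1 + 1))
  have hle : (1 : ℝ) ≤ ∑ k, 1 / ‖∏ j ∈ Finset.univ.erase k, (w k - w j)‖ := by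
    have h := congrArg norm hone
    rw [Polynomial.leadingCoeff_X_pow, norm_one] at h
    refine h.trans_le ((norm_sum_le _ _).trans_eq (Finset.sum_congr rfl fun k _ => ?_))
    rw [norm_div, Polynomial.eval_pow, Polynomial.eval_X, norm_pow,
      Complex.norm_exp_ofReal_mul_I, one_pow]
  calc 2 / Real.sqrt (a n ^ 2 + b n ^ 2) = 1 / ‖c‖ * 1 := by rw [hcnorm]; field_simp
    _ ≤ 1 / ‖c‖ * ∑ k, 1 / ‖∏ j ∈ Finset.univ.erase k, (w k - w j)‖ := by gcongr
    _ = ∑ k, 1 / |deriv P (z k)| := by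
      rw [Finset.mul_sum]
      refine Finset.sum_congr rfl fun k _ => ?_
      rw [hderiv, one_div_mul_one_div]
end

section
/- Let n ≥ 2, let x_1 < … < x_n be distinct real numbers, and let 1 ≤ k < n. Then for every x with x_k ≤ x ≤ x_{k+1}, one has ℓ_k(x) + ℓ_{k+1}(x) ≥ 1, where ℓ_k and ℓ_{k+1} are the Lagrange basis functions associated to the nodes x_1, …, x_n. -/
/-!
Write `a = x k`, `b = x (k+1)` and `t = λ a + μ b` with `λ + μ = 1`, `λ, μ ≥ 0`. The two basis
functions sum to `λ P + μ Q`, where `P = ∏ (t - y) / (a - y)` and `Q = ∏ (t - y) / (b - y)` run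
over the remaining nodes `y`, all of which lie outside `[a, b]`. Weighted AM-GM gives
`λ P + μ Q ≥ P ^ λ * Q ^ μ`, and the right-hand side is a product over `y` of factors that are
at least `1` by concavity of `log |· - y|` on `[a, b]` (`one_le_rpow_mul_rpow`).
-/

open Real

/-- Concavity of `log |· - y|` between `a` and `b`, in multiplicative form; `hp` and `hq` say that
`a`, `b` and `t` lie strictly on the same side of `y`. -/
lemma one_le_rpow_mul_rpow {a b y t u v : ℝ} (hu : 0 ≤ u) (hv : 0 ≤ v) (huv : u + v = 1)
    (ht : t = u * a + v * b) (hp : 0 < (t - y) / (a - y)) (hq : 0 < (t - y) / (b - y)) :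
    1 ≤ ((t - y) / (a - y)) ^ u * ((t - y) / (b - y)) ^ v := by
  -- The reciprocals of the two ratios have weighted arithmetic mean exactly `1`.
  have h := Real.geom_mean_le_arith_mean2_weighted hu hv (inv_pos.2 hp).le (inv_pos.2 hq).le huv
  have hty : t - y ≠ 0 := fun h0 => by simp [h0] at hp
  have hmean : u * ((t - y) / (a - y))⁻¹ + v * ((t - y) / (b - y))⁻¹ = 1 := by
    rw [inv_div, inv_div]
    field_simp
    linear_combination -ht - y * huv
  rw [hmean, Real.inv_rpow hp.le, Real.inv_rpow hq.le, ← mul_inv] at h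
  exact (inv_le_one₀ (by positivity)).1 h

lemma one_le_weighted_prod {ι : Type*} (s : Finset ι) (y : ι → ℝ) {a b t u v : ℝ}
    (hu : 0 ≤ u) (hv : 0 ≤ v) (huv : u + v = 1) (ht : t = u * a + v * b)
    (hp : ∀ i ∈ s, 0 < (t - y i) / (a - y i)) (hq : ∀ i ∈ s, 0 < (t - y i) / (b - y i)) :
    1 ≤ u * ∏ i ∈ s, (t - y i) / (a - y i) + v * ∏ i ∈ s, (t - y i) / (b - y i) := by
  refine le_trans ?_ (Real.geom_mean_le_arith_mean2_weighted hu hv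
    (Finset.prod_nonneg fun i hi => (hp i hi).le)
    (Finset.prod_nonneg fun i hi => (hq i hi).le) huv)
  rw [← Real.finsetProd_rpow s _ (fun i hi => (hp i hi).le),
    ← Real.finsetProd_rpow s _ (fun i hi => (hq i hi).le), ← Finset.prod_mul_distrib]
  exact Finset.one_le_prod fun i hi => one_le_rpow_mul_rpow hu hv huv ht (hp i hi) (hq i hi)

/-- **Lower bound on consecutive Lagrange basis functions.** Given distinct nodes
`x 0 < ⋯ < x (n-1)` (with `n ≥ 2`) and an index `k` with `k + 1 < n`, for every `t`
between `x k` and `x (k+1)` one has `ℓ_k(t) + ℓ_{k+1}(t) ≥ 1`, where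
`ℓ_j(t) = ∏_{i ≠ j} (t - x i)/(x j - x i)` are the Lagrange basis functions. -/
theorem consecutive_lagrange_lower_bound (n : ℕ) (hn : 2 ≤ n) (x : Fin n → ℝ)
    (hx : StrictMono x) (k : Fin n) (hk : (k : ℕ) + 1 < n) (t : ℝ)
    (ht1 : x k ≤ t) (ht2 : t ≤ x ⟨(k : ℕ) + 1, hk⟩) :
    1 ≤ (∏ i ∈ Finset.univ.erase k, (t - x i) / (x k - x i)) +
        ∏ i ∈ Finset.univ.erase ⟨(k : ℕ) + 1, hk⟩,
          (t - x i) / (x ⟨(k : ℕ) + 1, hk⟩ - x i) := by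
  set m : Fin n := ⟨(k : ℕ) + 1, hk⟩ with hm
  have hkm : k < m := by simp [Fin.lt_def, hm]
  have hab : 0 < x m - x k := sub_pos.2 (hx hkm)
  have hout : ∀ i ∈ (Finset.univ.erase k).erase m, x i < x k ∨ x m < x i := by
    intro i hi
    simp only [Finset.mem_erase, Finset.mem_univ, and_true, ne_eq, Fin.ext_iff, hm] at hi
    rcases Nat.lt_or_gt_of_ne hi.2 with h | h
    · exact Or.inl (hx h)
    · exact Or.inr (hx (by simp only [Fin.lt_def, hm]; omega))
  -- The weights are the factors that each basis function takes from the other's node.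
  have key := one_le_weighted_prod ((Finset.univ.erase k).erase m) x
    (a := x k) (b := x m) (t := t) (u := (t - x m) / (x k - x m)) (v := (t - x k) / (x m - x k))
    (div_nonneg_of_nonpos (by linarith) (by linarith)) (div_nonneg (by linarith) hab.le)
    (by rw [← neg_sub (x m) (x k), div_neg]; field_simp; ring)
    (by rw [← neg_sub (x m) (x k), div_neg]; field_simp; ring)
    (fun i hi => by
      rcases hout i hi with h | h
      · exact div_pos (by linarith) (by linarith)
      · exact div_pos_of_neg_of_neg (by linarith) (by linarith))
    (fun i hi => by
      rcases hout i hi with h | h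
      · exact div_pos (by linarith) (by linarith)
      · exact div_pos_of_neg_of_neg (by linarith) (by linarith))
  rw [Finset.mul_prod_erase (Finset.univ.erase k) (fun i => (t - x i) / (x k - x i))
    (by simp [hkm.ne']), Finset.erase_right_comm,
    Finset.mul_prod_erase (Finset.univ.erase m) (fun i => (t - x i) / (x m - x i))
    (by simp [hkm.ne])] at key
  exact key
end
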